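/- Let p be a prime and h a positive integer. Then the number of pairs (i, j) of natural numbers with 0 ≤ i ≤ j ≤ p^h − 1 and C(j, i) ≢ 0 (mod p) equals (p(p+1)/2)^h. -/

import Mathlib

/-!
By Lucas' theorem, `p ∤ C(n, k)` holds iff every base-`p` digit of `k` is at most the corresponding
digit of `n`. Splitting off the last digits of a pair below `p ^ (h + 1)` leaves a pair below
`p ^ h`, so each digit position contributes one factor: the number `p * (p + 1) / 2` of pairs
of digits `r ≤ s`.
-/

open Finset

section Lucas

variable {p n k : ℕ}

theorem le_of_not_dvd_choose (h : ¬ p ∣ n.choose k) : k ≤ n := by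
  contrapose! h
  simp only [Nat.choose_eq_zero_of_lt h, dvd_zero]

theorem not_dvd_choose_iff_le_of_lt (hp : p.Prime) (hn : n < p) : ¬ p ∣ n.choose k ↔ k ≤ n :=
  ⟨le_of_not_dvd_choose, fun hkn ↦ hp.coprime_iff_not_dvd.1 (hp.coprime_choose_of_lt hn hkn)⟩

theorem not_dvd_choose_iff_div_mod (hp : p.Prime) :
    ¬ p ∣ n.choose k ↔ ¬ p ∣ (n / p).choose (k / p) ∧ k % p ≤ n % p := by
  have : Fact p.Prime := ⟨hp⟩
  have lucas : p ∣ n.choose k ↔ p ∣ (n % p).choose (k % p) * (n / p).choose (k / p) :=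
    Choose.choose_modEq_choose_mod_mul_choose_div_nat.dvd_iff dvd_rfl
  rw [lucas, hp.dvd_mul, not_or, not_dvd_choose_iff_le_of_lt hp (Nat.mod_lt n hp.pos), and_comm]

end Lucas

theorem card_filter_fst_le_snd {α : Type*} [LinearOrder α] (s : Finset α) :
    #{x ∈ s ×ˢ s | x.1 ≤ x.2} = #s * (#s + 1) / 2 := by
  have card_eq_sym2 : #{x ∈ s ×ˢ s | x.1 ≤ x.2} = #s.sym2 := by
    refine card_nbij' (fun x ↦ s(x.1, x.2)) (fun z ↦ (z.inf, z.sup)) ?_ ?_ ?_ ?_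
    · intro x hx
      simp_all
    · intro z hz
      induction z with | _ a b
      obtain hab | hba := le_total a b <;> simp_all
    · intro x hx
      simp_all
    · intro z _
      exact Sym2.sortEquiv.left_inv z
  rw [card_eq_sym2, card_sym2, Nat.choose_two_right, Nat.add_sub_cancel, mul_comm]

theorem card_filter_div_mod (m b : ℕ) (R S : ℕ → ℕ → Prop) [DecidableRel R] [DecidableRel S] :
    #{x ∈ range (m * b) ×ˢ range (m * b) | R (x.1 / b) (x.2 / b) ∧ S (x.1 % b) (x.2 % b)} =
      #{x ∈ range m ×ˢ range m | R x.1 x.2} * #{x ∈ range b ×ˢ range b | S x.1 x.2} := by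
  obtain rfl | hb := b.eq_zero_or_pos
  · simp
  have div_eq {a r : ℕ} (hr : r < b) : (b * a + r) / b = a := by
    rw [Nat.mul_add_div hb, Nat.div_eq_of_lt hr, add_zero]
  have mod_eq {a r : ℕ} (hr : r < b) : (b * a + r) % b = r := by
    rw [Nat.mul_add_mod, Nat.mod_eq_of_lt hr]
  rw [← card_product]
  refine card_nbij' (fun x ↦ ((x.1 / b, x.2 / b), (x.1 % b, x.2 % b)))
    (fun y ↦ (b * y.1.1 + y.2.1, b * y.1.2 + y.2.2)) ?_ ?_ ?_ ?_
  · rintro ⟨i, j⟩ hx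
    simp_all [Nat.div_lt_iff_lt_mul, Nat.mod_lt]
  · rintro ⟨⟨a, c⟩, ⟨r, t⟩⟩ hy
    simp_all [← Nat.div_lt_iff_lt_mul hb]
  · rintro ⟨i, j⟩ -
    simp only [Nat.div_add_mod]
  · rintro ⟨⟨a, c⟩, ⟨r, t⟩⟩ hy
    simp_all

theorem card_filter_not_dvd_choose_mul {p : ℕ} (hp : p.Prime) (m : ℕ) :
    #{x ∈ range (m * p) ×ˢ range (m * p) | ¬ p ∣ x.2.choose x.1} =
      #{x ∈ range m ×ˢ range m | ¬ p ∣ x.2.choose x.1} * (p * (p + 1) / 2) := by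
  rw [filter_congr fun _ _ ↦ not_dvd_choose_iff_div_mod hp,
    card_filter_div_mod m p (fun i j ↦ ¬ p ∣ j.choose i) (· ≤ ·), card_filter_fst_le_snd,
    card_range]

/-- The number of pairs `(i, j)` with `0 ≤ i ≤ j ≤ p^h − 1` and `p ∤ C(j, i)`
equals `(p(p+1)/2)^h`. -/
theorem stmt_8 (p h : ℕ) (hp : p.Prime) (hh : 0 < h) :
    ((Finset.range (p ^ h) ×ˢ Finset.range (p ^ h)).filter
      (fun ij : ℕ × ℕ => ij.1 ≤ ij.2 ∧ ¬ p ∣ Nat.choose ij.2 ij.1)).card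
    = (p * (p + 1) / 2) ^ h := by
  simp only [and_iff_right_of_imp le_of_not_dvd_choose]
  clear hh
  induction h with
  | zero => simp [filter_singleton, hp.ne_one]
  | succ h ih => rw [pow_succ, card_filter_not_dvd_choose_mul hp, ih, pow_succ]
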